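/- Let p be an odd prime and (V, Q) a nondegenerate quadratic space over ℚ_p of dimension n ≥ 3 containing no self-dual lattice. If Λ₁ and Λ₂ are two vertex lattices of type 2 in V (i.e. pΛᵢ ⊆ Λᵢ^∨ ⊆ Λᵢ with dim_{𝔽_p}(Λᵢ/Λᵢ^∨) = 2), then there exists a ℚ_p-linear isometry g of (V, Q) with det(g) = 1 such that g(Λ₁) = Λ₂; that is, SO(V)(ℚ_p) acts transitively on the set of vertex lattices of type 2 in V. -/

import Mathlib

/-!
Statement 3: Let `p` be an odd prime and `(V, Q)` a nondegenerate quadratic space over `ℚ_p` of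
dimension `n ≥ 3` containing no self-dual lattice.  Then `SO(V)(ℚ_p)` acts transitively on the
set of vertex lattices of type 2 in `V`.
-/

open QuadraticMap

variable (p : ℕ) [Fact p.Prime]
variable {V : Type*} [AddCommGroup V] [Module ℚ_[p] V] [Module ℤ_[p] V]
  [IsScalarTower ℤ_[p] ℚ_[p] V]

/-- `L` is a `ℤ_p`-lattice in the `ℚ_p`-vector space `V`:
a finitely generated `ℤ_p`-submodule spanning `V` over `ℚ_p`. -/
def IsLattice (L : Submodule ℤ_[p] V) : Prop :=
  L.FG ∧ Submodule.span ℚ_[p] (L : Set V) = ⊤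

/-- The dual lattice `L^∨ = {x ∈ V : [x, y] ∈ ℤ_p for all y ∈ L}` with respect to the
bilinear form `[x, y] = Q (x + y) - Q x - Q y` associated to `Q`. -/
noncomputable def dualLattice (Q : QuadraticForm ℚ_[p] V) (L : Submodule ℤ_[p] V) :
    Submodule ℤ_[p] V :=
  LinearMap.BilinForm.dualSubmodule (QuadraticMap.polarBilin Q) L

/-- There is a saturated chain (each step a covering in the lattice of `ℤ_p`-submodules) of
length `k` from `A` to `B`.  For `A ≤ B` this says exactly that the module `B/A` has length `k`
over `ℤ_p`; when `B/A` is killed by `p` this is the statement `dim_{𝔽_p} (B/A) = k`. -/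
def chainLength (A B : Submodule ℤ_[p] V) (k : ℕ) : Prop :=
  ∃ f : Fin (k + 1) → Submodule ℤ_[p] V,
    f 0 = A ∧ f (Fin.last k) = B ∧ ∀ i : Fin k, f i.castSucc ⋖ f i.succ

/-- `Λ` is a vertex lattice of type 2: a lattice with `pΛ ⊆ Λ^∨ ⊆ Λ` and
`dim_{𝔽_p} (Λ/Λ^∨) = 2`. -/
noncomputable def IsTypeTwoVertexLattice (Q : QuadraticForm ℚ_[p] V)
    (Λ : Submodule ℤ_[p] V) : Prop :=
  IsLattice p Λ ∧ (∀ x ∈ Λ, (p : ℤ_[p]) • x ∈ dualLattice p Q Λ) ∧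
    dualLattice p Q Λ ≤ Λ ∧ chainLength p (dualLattice p Q Λ) Λ 2


section AuxLemmas

lemma aux_norm_two (hp : p ≠ 2) : ‖(2 : ℤ_[p])‖ = 1 := by
  have h : ¬ (p : ℤ) ∣ 2 := by
    intro h
    have h2 : p ∣ 2 := by exact_mod_cast h
    rcases (Nat.dvd_prime Nat.prime_two).1 h2 with h1 | h1
    · exact (Fact.out : p.Prime).one_lt.ne' h1
    · exact hp h1
  have h3 := (PadicInt.norm_int_lt_one_iff_dvd (p := p) 2).not.2 h
  have h4 : ‖(2 : ℤ_[p])‖ ≤ 1 := PadicInt.norm_le_one _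
  push_cast at h3
  exact le_antisymm h4 (not_lt.1 h3)

lemma aux_toZMod_eq_zero (u : ℤ_[p]) : PadicInt.toZMod u = 0 ↔ ‖u‖ < 1 := by
  rw [← RingHom.mem_ker, PadicInt.ker_toZMod, IsLocalRing.mem_maximalIdeal, PadicInt.mem_nonunits]

lemma aux_hensel (hp : p ≠ 2) (u a : ℤ_[p]) (hu : ‖u‖ = 1)
    (h : PadicInt.toZMod u = PadicInt.toZMod a ^ 2) : ∃ z : ℤ_[p], z ^ 2 = u := by
  have ha : ‖a‖ = 1 := by
    refine le_antisymm (PadicInt.norm_le_one _) (not_lt.1 fun hlt => ?_)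
    have h0 := (aux_toZMod_eq_zero p a).2 hlt
    rw [h0] at h
    have := (aux_toZMod_eq_zero p u).1 (by simpa using h)
    linarith
  have hd : ‖a ^ 2 - u‖ < 1 := by
    rw [← aux_toZMod_eq_zero]; simp [h]
  obtain ⟨z, hz, -⟩ := hensels_lemma (p := p) (R := ℤ_[p])
    (F := Polynomial.X ^ 2 - Polynomial.C u) (a := a) (by
      simpa [ha, one_add_one_eq_two, aux_norm_two p hp] using hd)
  refine ⟨z, ?_⟩
  simpa [sub_eq_zero] using hz

lemma aux_nonsq (hp : p ≠ 2) (u v : ℚ_[p]) (hu : ‖u‖ = 1) (hv : ‖v‖ = 1)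
    (hu' : ¬ IsSquare u) (hv' : ¬ IsSquare v) : IsSquare (u / v) := by
  have key : ∀ w : ℤ_[p], ‖w‖ = 1 → IsSquare (PadicInt.toZMod w) → IsSquare (w : ℚ_[p]) := by
    intro w hw ⟨r, hr⟩
    obtain ⟨a, rfl⟩ := ZMod.ringHom_surjective (PadicInt.toZMod (p := p)) r
    obtain ⟨z, hz⟩ := aux_hensel p hp w a hw (by rw [hr, pow_two])
    exact ⟨z, by rw [← hz]; push_cast; ring⟩
  set U : ℤ_[p] := ⟨u, hu.le⟩ with hU
  set W : ℤ_[p] := ⟨v, hv.le⟩ with hW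
  have hU1 : ‖U‖ = 1 := hu
  have hW1 : ‖W‖ = 1 := hv
  have h1 : ¬ IsSquare (PadicInt.toZMod U) := fun h => hu' (key U hU1 h)
  have h2 : ¬ IsSquare (PadicInt.toZMod W) := fun h => hv' (key W hW1 h)
  have h3 : IsSquare (PadicInt.toZMod (U * W)) := by
    rw [map_mul]
    have hne : PadicInt.toZMod U * PadicInt.toZMod W ≠ 0 := by
      refine mul_ne_zero ?_ ?_
      · rw [Ne, aux_toZMod_eq_zero]; simp [hU1]
      · rw [Ne, aux_toZMod_eq_zero]; simp [hW1]
    rw [← quadraticChar_one_iff_isSquare hne, map_mul,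
      quadraticChar_neg_one_iff_not_isSquare.2 h1, quadraticChar_neg_one_iff_not_isSquare.2 h2]
    norm_num
  obtain ⟨r, hr⟩ := key (U * W) (by simp [hU1, hW1]) h3
  have hr' : u * v = r * r := by simpa using hr
  have hv0 : v ≠ 0 := by rintro rfl; simp at hv
  exact ⟨r / v, by field_simp; rw [hr']; ring⟩

lemma aux_rep (hp : p ≠ 2) (a b : ℚ_[p]) (ha : ‖a‖ = 1) (hb : ‖b‖ = 1) :
    ∃ x y : ℤ_[p], a * (x : ℚ_[p]) ^ 2 + b * (y : ℚ_[p]) ^ 2 = 1 := by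
  -- one-sided lifting
  have key : ∀ A B x y : ℤ_[p], ‖A‖ = 1 → ‖x‖ = 1 →
      PadicInt.toZMod (A * x ^ 2 + B * y ^ 2) = 1 → ∃ z : ℤ_[p], A * z ^ 2 + B * y ^ 2 = 1 := by
    intro A B x y hA hx h
    obtain ⟨C, hC⟩ := (PadicInt.isUnit_iff.2 hA).exists_right_inv
    have hC1 : ‖C‖ = 1 := by
      have := congrArg norm hC
      simpa [hA] using this
    have e : PadicInt.toZMod ((1 - B * y ^ 2) * C) = PadicInt.toZMod x ^ 2 := by
      have hC' : PadicInt.toZMod A * PadicInt.toZMod C = 1 := by rw [← map_mul, hC, map_one]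
      simp only [map_add, map_mul, map_pow, map_sub, map_one] at h ⊢
      rw [← h]
      linear_combination (PadicInt.toZMod x ^ 2) * hC'
    have hn : ‖(1 - B * y ^ 2) * C‖ = 1 := by
      refine le_antisymm (PadicInt.norm_le_one _) (not_lt.1 fun hlt => ?_)
      rw [← aux_toZMod_eq_zero, e, pow_eq_zero_iff two_ne_zero, aux_toZMod_eq_zero] at hlt
      linarith
    obtain ⟨z, hz⟩ := aux_hensel p hp _ x hn e
    refine ⟨z, ?_⟩
    rw [hz]
    linear_combination (1 - B * y ^ 2) * hC
  set A : ℤ_[p] := ⟨a, ha.le⟩ with hAdef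
  set B : ℤ_[p] := ⟨b, hb.le⟩ with hBdef
  have hA : ‖A‖ = 1 := ha
  have hB : ‖B‖ = 1 := hb
  have hA0 : PadicInt.toZMod A ≠ 0 := by rw [Ne, aux_toZMod_eq_zero]; simp [hA]
  have hB0 : PadicInt.toZMod B ≠ 0 := by rw [Ne, aux_toZMod_eq_zero]; simp [hB]
  suffices h : ∃ x y : ℤ_[p], A * x ^ 2 + B * y ^ 2 = 1 by
    obtain ⟨x, y, h⟩ := h
    refine ⟨x, y, ?_⟩
    have := congrArg (fun t : ℤ_[p] => (t : ℚ_[p])) h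
    simpa using this
  obtain ⟨r, s, hrs⟩ : ∃ r s : ZMod p, PadicInt.toZMod A * r ^ 2 + PadicInt.toZMod B * s ^ 2 = 1 := by
    obtain ⟨r, s, h⟩ := FiniteField.exists_root_sum_quadratic (R := ZMod p)
      (f := Polynomial.C (PadicInt.toZMod A) * Polynomial.X ^ 2)
      (g := Polynomial.C (PadicInt.toZMod B) * Polynomial.X ^ 2 - Polynomial.C 1)
      (Polynomial.degree_C_mul_X_pow 2 hA0)
      (by
        rw [Polynomial.degree_sub_eq_left_of_degree_lt]
        · exact Polynomial.degree_C_mul_X_pow 2 hB0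
        · rw [Polynomial.degree_C_mul_X_pow 2 hB0, Polynomial.degree_C one_ne_zero]
          norm_num)
      (by
        rw [ZMod.card]
        rcases (Fact.out : p.Prime).eq_two_or_odd with h | h
        · exact absurd h hp
        · exact h)
    refine ⟨r, s, ?_⟩
    simp at h
    linear_combination h
  obtain ⟨x, rfl⟩ := ZMod.ringHom_surjective (PadicInt.toZMod (p := p)) r
  obtain ⟨y, rfl⟩ := ZMod.ringHom_surjective (PadicInt.toZMod (p := p)) s
  by_cases hx : ‖x‖ = 1
  · obtain ⟨z, hz⟩ := key A B x y hA hx (by simpa using hrs)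
    exact ⟨z, y, hz⟩
  · by_cases hy : ‖y‖ = 1
    · obtain ⟨z, hz⟩ := key B A y x hB hy (by rw [add_comm]; simpa using hrs)
      exact ⟨x, z, by rw [add_comm]; exact hz⟩
    · have hx' := (aux_toZMod_eq_zero p x).2 (lt_of_le_of_ne (PadicInt.norm_le_one _) hx)
      have hy' := (aux_toZMod_eq_zero p y).2 (lt_of_le_of_ne (PadicInt.norm_le_one _) hy)
      simp [hx', hy'] at hrs

lemma aux_norm_two' (hp : p ≠ 2) : ‖(2 : ℚ_[p])‖ = 1 := by
  have := aux_norm_two p hp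
  rw [PadicInt.norm_def] at this
  have e : ((2 : ℤ_[p]) : ℚ_[p]) = 2 := by norm_cast
  rwa [e] at this

lemma aux_polar_self (Q : QuadraticForm ℚ_[p] V) (x : V) : polar Q x x = 2 * Q x := by
  simp

lemma aux_smul (r : ℤ_[p]) (x : V) : r • x = (r : ℚ_[p]) • x :=
  (IsScalarTower.algebraMap_smul ℚ_[p] r x).symm

lemma aux_smul_mem (L : Submodule ℤ_[p] V) (r : ℚ_[p]) (hr : ‖r‖ ≤ 1) (x : V) (hx : x ∈ L) :
    r • x ∈ L := by
  obtain ⟨z, rfl⟩ : ∃ z : ℤ_[p], (z : ℚ_[p]) = r := ⟨⟨r, hr⟩, rfl⟩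
  rw [← aux_smul]
  exact L.smul_mem z hx

lemma aux_diag (hp : p ≠ 2) [FiniteDimensional ℚ_[p] V] (Q : QuadraticForm ℚ_[p] V) (d : ℕ) :
    ∀ L : Submodule ℤ_[p] V, Module.finrank ℚ_[p] (Submodule.span ℚ_[p] (L : Set V)) ≤ d →
    (∀ x ∈ L, ‖(p : ℚ_[p]) * Q x‖ ≤ 1) →
    (∀ x ∈ L, (∀ y ∈ L, polar Q x y = 0) → x = 0) →
    ∃ (k : ℕ) (b : Fin k → V), (∀ i j, i ≠ j → polar Q (b i) (b j) = 0) ∧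
      (∀ i, Q (b i) ≠ 0) ∧ Submodule.span ℤ_[p] (Set.range b) = L := by
  induction d with
  | zero =>
    intro L hd _ _
    refine ⟨0, Fin.elim0, fun i => i.elim0, fun i => i.elim0, ?_⟩
    have h0 : Submodule.span ℚ_[p] (L : Set V) = ⊥ := Submodule.finrank_eq_zero.1 (by omega)
    have : L = ⊥ := by
      rw [eq_bot_iff]
      intro x hx
      have : x ∈ Submodule.span ℚ_[p] (L : Set V) := Submodule.subset_span hx
      rw [h0] at this
      simpa using this
    rw [this]
    simp
  | succ d ih =>
    intro L hd hb hnd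
    by_cases hL : ∀ x ∈ L, Q x = 0
    · have : L = ⊥ := by
        rw [eq_bot_iff]
        intro x hx
        have := hnd x hx (fun y hy => by
          simp [polar, hL _ hx, hL _ hy, hL _ (L.add_mem hx hy)])
        simpa using this
      refine ⟨0, Fin.elim0, fun i => i.elim0, fun i => i.elim0, ?_⟩
      rw [this]
      simp
    push Not at hL
    -- choose a vector with maximal norm
    obtain ⟨x, hx, hQx, hmax⟩ : ∃ x ∈ L, Q x ≠ 0 ∧ ∀ y ∈ L, ‖Q y‖ ≤ ‖Q x‖ := by
      have hp0 : (p : ℚ_[p]) ≠ 0 := by exact_mod_cast (Fact.out : p.Prime).ne_zero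
      let S : Set ℕ := {m | ∃ x ∈ L, Q x ≠ 0 ∧ ‖(p : ℚ_[p]) * Q x‖ = (p : ℝ) ^ (-(m : ℤ))}
      have hS : ∀ x ∈ L, Q x ≠ 0 → ∃ m ∈ S, ‖(p : ℚ_[p]) * Q x‖ = (p : ℝ) ^ (-(m : ℤ)) := by
        intro x hx hQ
        obtain ⟨z, hzz⟩ : ∃ z : ℤ_[p], (z : ℚ_[p]) = (p : ℚ_[p]) * Q x := ⟨⟨_, hb x hx⟩, rfl⟩
        have hz : z ≠ 0 := by
          rintro rfl
          have h := mul_ne_zero hp0 hQ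
          rw [← hzz] at h
          simp at h
        have := PadicInt.norm_eq_zpow_neg_valuation hz
        rw [PadicInt.norm_def, hzz] at this
        exact ⟨_, ⟨x, hx, hQ, this⟩, this⟩
      have hne : S.Nonempty := by
        obtain ⟨x, hx, hQ⟩ := hL
        obtain ⟨m, hm, _⟩ := hS x hx hQ
        exact ⟨m, hm⟩
      classical
      obtain ⟨x, hx, hQ, hm⟩ := Nat.sInf_mem hne
      refine ⟨x, hx, hQ, fun y hy => ?_⟩
      by_cases hy0 : Q y = 0
      · simp [hy0]
      obtain ⟨m, hmS, hym⟩ := hS y hy hy0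
      have hle : sInf S ≤ m := Nat.sInf_le hmS
      have hpp : ‖(p : ℚ_[p]) * Q y‖ ≤ ‖(p : ℚ_[p]) * Q x‖ := by
        rw [hym, hm]
        apply zpow_le_zpow_right₀
        · exact_mod_cast (Fact.out : p.Prime).one_lt.le
        · omega
      rw [norm_mul, norm_mul] at hpp
      exact le_of_mul_le_mul_left hpp (norm_pos_iff.2 hp0)
    have h20 : (2 : ℚ_[p]) ≠ 0 := by norm_num
    have hcoef : ∀ y ∈ L, ‖polar Q x y / (2 * Q x)‖ ≤ 1 := by
      intro y hy
      rw [norm_div, norm_mul, aux_norm_two' p hp, one_mul]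
      apply div_le_one_of_le₀ _ (norm_nonneg _)
      have e : polar Q x y = Q (x + y) + (-Q x + -Q y) := by simp [polar]; try ring
      rw [e]
      refine (Padic.nonarchimedean _ _).trans (max_le (hmax _ (L.add_mem hx hy)) ?_)
      refine (Padic.nonarchimedean _ _).trans (max_le ?_ ?_)
      · simp
      · simpa using hmax y hy
    let L' : Submodule ℤ_[p] V :=
      { carrier := {y | y ∈ L ∧ polar Q x y = 0}
        add_mem' := by
          rintro a b ⟨ha, ha'⟩ ⟨hb, hb'⟩
          exact ⟨L.add_mem ha hb, by rw [polar_add_right, ha', hb', add_zero]⟩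
        zero_mem' := ⟨L.zero_mem, by simp⟩
        smul_mem' := by
          rintro r a ⟨ha, ha'⟩
          exact ⟨L.smul_mem r ha, by rw [aux_smul, polar_smul_right, ha', smul_zero]⟩ }
    have hL'L : L' ≤ L := fun y hy => hy.1
    have hdec : ∀ y ∈ L, y - (polar Q x y / (2 * Q x)) • x ∈ L' := by
      intro y hy
      refine ⟨L.sub_mem hy (aux_smul_mem p L _ (hcoef y hy) x hx), ?_⟩
      rw [polar_sub_right, polar_smul_right, aux_polar_self, smul_eq_mul]
      field_simp
      ring
    have hspan : Submodule.span ℚ_[p] (L' : Set V) < Submodule.span ℚ_[p] (L : Set V) := by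
      refine lt_of_le_of_ne (Submodule.span_mono hL'L) fun h => ?_
      have h1 : x ∈ Submodule.span ℚ_[p] (L' : Set V) := by
        rw [h]; exact Submodule.subset_span hx
      have h2 : Submodule.span ℚ_[p] (L' : Set V) ≤ LinearMap.ker (polarBilin Q x) := by
        rw [Submodule.span_le]
        intro y hy
        simpa using hy.2
      have h3 := h2 h1
      simp [hQx] at h3
    have hrank := Submodule.finrank_lt_finrank_of_lt hspan
    obtain ⟨k, b, hb1, hb2, hb3⟩ := ih L' (by omega) (fun y hy => hb y hy.1) (by
      intro y hy h
      refine hnd y hy.1 fun z hz => ?_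
      have h1 := h _ (hdec z hz)
      rw [polar_sub_right, polar_smul_right, polar_comm Q y x, hy.2] at h1
      simpa using h1)
    have hbL' : ∀ i, b i ∈ L' := fun i => hb3 ▸ Submodule.subset_span ⟨i, rfl⟩
    refine ⟨k + 1, Fin.cons x b, ?_, ?_, ?_⟩
    · intro i j
      refine Fin.cases ?_ (fun i => ?_) i <;> refine Fin.cases ?_ (fun j => ?_) j
      · simp
      · intro _; simpa using (hbL' j).2
      · intro _; rw [polar_comm]; simpa using (hbL' i).2
      · intro h; simpa using hb1 i j (fun e => h (by rw [e]))
    · intro i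
      refine Fin.cases ?_ (fun i => ?_) i
      · simpa using hQx
      · simpa using hb2 i
    · rw [Fin.range_cons, Submodule.span_insert, hb3]
      apply le_antisymm
      · refine sup_le ?_ hL'L
        rw [Submodule.span_singleton_le_iff_mem]; exact hx
      · intro y hy
        have : y = (polar Q x y / (2 * Q x)) • x + (y - (polar Q x y / (2 * Q x)) • x) := by abel
        rw [this]
        exact Submodule.add_mem_sup
          (aux_smul_mem p _ _ (hcoef y hy) x (Submodule.mem_span_singleton_self x)) (hdec y hy)

structure AuxOF {ι : Type*} (Q : QuadraticForm ℚ_[p] V) (L : Submodule ℤ_[p] V)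
    (b : ι → V) (c : ι → ℚ_[p]) : Prop where
  orth : ∀ i j, i ≠ j → polar Q (b i) (b j) = 0
  val : ∀ i, Q (b i) = c i
  span : Submodule.span ℤ_[p] (Set.range b) = L

lemma AuxOF.mem {ι : Type*} {Q : QuadraticForm ℚ_[p] V} {L : Submodule ℤ_[p] V}
    {b : ι → V} {c : ι → ℚ_[p]} (h : AuxOF p Q L b c) (i : ι) : b i ∈ L := by
  rw [← h.span]; exact Submodule.subset_span ⟨i, rfl⟩

lemma aux_Q_comb (Q : QuadraticForm ℚ_[p] V) (x y : ℚ_[p]) (u v : V) (h : polar Q u v = 0) :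
    Q (x • u + y • v) = x ^ 2 * Q u + y ^ 2 * Q v := by
  have e : polar Q (x • u) (y • v) = 0 := by simp [h]
  have : Q (x • u + y • v) = polar Q (x • u) (y • v) + Q (x • u) + Q (y • v) := by
    simp only [polar]; ring
  rw [this, e, QuadraticMap.map_smul, QuadraticMap.map_smul]
  simp only [smul_eq_mul]; ring

lemma aux_swap2 (hp : p ≠ 2) {ι : Type*} [DecidableEq ι] {Q : QuadraticForm ℚ_[p] V}
    {L : Submodule ℤ_[p] V} {b : ι → V} {c : ι → ℚ_[p]} (h : AuxOF p Q L b c)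
    (i j : ι) (hij : i ≠ j) (c0 : ℚ_[p]) (hc0 : c0 ≠ 0) (hi : ‖c i‖ = ‖c0‖) (hj : ‖c j‖ = ‖c0‖) :
    ∃ b' : ι → V, AuxOF p Q L b' (fun k => if k = i then c0 else if k = j then c i * c j / c0
      else c k) := by
  have hn0 : ‖c0‖ ≠ 0 := norm_ne_zero_iff.2 hc0
  have hci : ‖c i / c0‖ = 1 := by rw [norm_div, hi, div_self hn0]
  have hcj : ‖c j / c0‖ = 1 := by rw [norm_div, hj, div_self hn0]
  obtain ⟨X, Y, hXY⟩ := aux_rep p hp _ _ hci hcj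
  have hx : ‖(X : ℚ_[p])‖ ≤ 1 := X.2
  have hy : ‖(Y : ℚ_[p])‖ ≤ 1 := Y.2
  generalize (X : ℚ_[p]) = x at *
  generalize (Y : ℚ_[p]) = y at *
  have hxy : c i * x ^ 2 + c j * y ^ 2 = c0 := by
    field_simp at hXY; linear_combination hXY
  have hcx : ‖c i / c0 * x‖ ≤ 1 := by rw [norm_mul, hci, one_mul]; exact hx
  have hcy : ‖c j / c0 * y‖ ≤ 1 := by rw [norm_mul, hcj, one_mul]; exact hy
  have hcy' : ‖-(c j / c0 * y)‖ ≤ 1 := by rwa [norm_neg]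
  have hy' : ‖-y‖ ≤ 1 := by rwa [norm_neg]
  set u := x • b i + y • b j with hu
  set v := (-(c j / c0 * y)) • b i + (c i / c0 * x) • b j with hv
  have oij := h.orth i j hij
  have oji := h.orth j i hij.symm
  have hpi : polar Q (b i) (b i) = 2 * c i := by rw [aux_polar_self, h.val]
  have hpj : polar Q (b j) (b j) = 2 * c j := by rw [aux_polar_self, h.val]
  have huv : polar Q u v = 0 := by
    simp only [hu, hv, polar_add_left, polar_add_right, polar_smul_left, polar_smul_right,
      oij, oji, hpi, hpj, smul_eq_mul]
    ring
  have huk : ∀ k, k ≠ i → k ≠ j → polar Q u (b k) = 0 := by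
    intro k hki hkj
    simp [hu, polar_add_left, polar_smul_left, h.orth i k hki.symm, h.orth j k hkj.symm]
  have hvk : ∀ k, k ≠ i → k ≠ j → polar Q v (b k) = 0 := by
    intro k hki hkj
    simp [hv, polar_add_left, polar_smul_left, h.orth i k hki.symm, h.orth j k hkj.symm]
  have hbi : b i = (c i / c0 * x) • u + (-y) • v := by
    have e : (c i / c0 * x) * x + (-y) * (-(c j / c0 * y)) = 1 := by
      rw [← hXY]; ring
    have e2 : (c i / c0 * x) * y + (-y) * (c i / c0 * x) = 0 := by ring
    calc b i = ((c i / c0 * x) * x + (-y) * (-(c j / c0 * y))) • b i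
        + ((c i / c0 * x) * y + (-y) * (c i / c0 * x)) • b j := by rw [e, e2]; simp
      _ = _ := by rw [hu, hv]; module
  have hbj : b j = (c j / c0 * y) • u + x • v := by
    have e : (c j / c0 * y) * y + x * (c i / c0 * x) = 1 := by
      rw [← hXY]; ring
    have e2 : (c j / c0 * y) * x + x * (-(c j / c0 * y)) = 0 := by ring
    calc b j = ((c j / c0 * y) * y + x * (c i / c0 * x)) • b j
        + ((c j / c0 * y) * x + x * (-(c j / c0 * y))) • b i := by rw [e, e2]; simp
      _ = _ := by rw [hu, hv]; module
  refine ⟨fun k => if k = i then u else if k = j then v else b k, ?_, ?_, ?_⟩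
  · intro k l hkl
    by_cases hki : k = i
    · subst hki
      by_cases hlj : l = j
      · subst hlj; simpa [hkl.symm] using huv
      · simpa [hkl.symm, hlj] using huk l hkl.symm hlj
    · by_cases hkj : k = j
      · subst hkj
        by_cases hli : l = i
        · subst hli; rw [polar_comm]; simpa [hkl] using huv
        · simpa [hli, hki, hkl.symm] using hvk l hli hkl.symm
      · by_cases hli : l = i
        · subst hli; rw [polar_comm]; simpa [hki, hkj] using huk k hki hkj
        · by_cases hlj : l = j
          · subst hlj; rw [polar_comm]; simpa [hki, hkj, hli] using hvk k hki hkj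
          · simpa [hki, hkj, hli, hlj] using h.orth k l hkl
  · intro k
    by_cases hki : k = i
    · subst hki
      simp only [if_true]
      rw [hu, aux_Q_comb p Q _ _ _ _ oij, h.val, h.val, ← hxy]; ring
    · by_cases hkj : k = j
      · subst hkj
        simp only [hki, if_false, if_true]
        rw [hv, aux_Q_comb p Q _ _ _ _ oij, h.val, h.val]
        field_simp
        linear_combination (c i * c k) * hxy
      · simpa [hki, hkj] using h.val k
  · apply le_antisymm
    · rw [Submodule.span_le]
      rintro _ ⟨k, rfl⟩
      dsimp only
      split_ifs
      · exact L.add_mem (aux_smul_mem p L _ hx _ (h.mem p i)) (aux_smul_mem p L _ hy _ (h.mem p j))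
      · exact L.add_mem (aux_smul_mem p L _ hcy' _ (h.mem p i))
          (aux_smul_mem p L _ hcx _ (h.mem p j))
      · exact h.mem p k
    · conv_lhs => rw [← h.span]
      rw [Submodule.span_le]
      set L' := Submodule.span ℤ_[p]
        (Set.range fun k => if k = i then u else if k = j then v else b k) with hL'
      have hu' : u ∈ L' := Submodule.subset_span ⟨i, by simp⟩
      have hv' : v ∈ L' := Submodule.subset_span ⟨j, by simp [hij.symm]⟩
      rintro _ ⟨k, rfl⟩
      by_cases hki : k = i
      · subst hki; rw [hbi]
        exact L'.add_mem (aux_smul_mem p L' _ hcx _ hu') (aux_smul_mem p L' _ hy' _ hv')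
      · by_cases hkj : k = j
        · subst hkj; rw [hbj]
          exact L'.add_mem (aux_smul_mem p L' _ hcy _ hu') (aux_smul_mem p L' _ hx _ hv')
        · exact Submodule.subset_span ⟨k, by simp [hki, hkj]⟩

lemma aux_scale {ι : Type*} [DecidableEq ι] {Q : QuadraticForm ℚ_[p] V}
    {L : Submodule ℤ_[p] V} {b : ι → V} {c : ι → ℚ_[p]} (h : AuxOF p Q L b c)
    (i : ι) (s : ℚ_[p]) (hs : ‖s‖ = 1) :
    AuxOF p Q L (fun k => if k = i then s • b k else b k)
      (fun k => if k = i then s ^ 2 * c k else c k) := by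
  have hs0 : s ≠ 0 := by rintro rfl; simp at hs
  refine ⟨?_, ?_, ?_⟩
  · intro k l hkl
    split_ifs <;> simp [polar_smul_left, polar_smul_right, h.orth k l hkl]
  · intro k
    split_ifs
    · rw [QuadraticMap.map_smul, h.val, smul_eq_mul]; ring
    · exact h.val k
  · apply le_antisymm
    · rw [Submodule.span_le]
      rintro _ ⟨k, rfl⟩
      dsimp only
      split_ifs
      · exact aux_smul_mem p L _ hs.le _ (h.mem p k)
      · exact h.mem p k
    · conv_lhs => rw [← h.span]
      rw [Submodule.span_le]
      rintro _ ⟨k, rfl⟩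
      by_cases hk : k = i
      · have e : b k = s⁻¹ • (s • b k) := by rw [smul_smul, inv_mul_cancel₀ hs0, one_smul]
        rw [e]
        refine aux_smul_mem p _ _ (by rw [norm_inv, hs, inv_one]) _ ?_
        exact Submodule.subset_span ⟨k, by simp [hk]⟩
      · exact Submodule.subset_span ⟨k, by simp [hk]⟩

lemma aux_multi (hp : p ≠ 2) {ι : Type*} [DecidableEq ι] {Q : QuadraticForm ℚ_[p] V}
    {L : Submodule ℤ_[p] V} {b : ι → V} {c : ι → ℚ_[p]} (h : AuxOF p Q L b c)
    (l : ι) (c' : ι → ℚ_[p]) (r : ℝ) (hr : r ≠ 0) (hl : ‖c l‖ = r) (S : Finset ι) :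
    l ∉ S → (∀ i ∈ S, ‖c i‖ = r) → (∀ i ∈ S, ‖c' i‖ = r) →
    ∃ (b' : ι → V) (d : ι → ℚ_[p]), AuxOF p Q L b' d ∧ (∀ i ∈ S, d i = c' i) ∧
      (∀ i, i ∉ S → i ≠ l → d i = c i) ∧ ‖d l‖ = r := by
  induction S using Finset.induction_on with
  | empty => intro _ _ _; exact ⟨b, c, h, by simp, by simp, hl⟩
  | insert a S ha ih =>
    intro hlS h1 h2
    obtain ⟨b', d, hd, hd1, hd2, hd3⟩ := ih (fun h => hlS (Finset.mem_insert_of_mem h))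
      (fun i hi => h1 i (Finset.mem_insert_of_mem hi))
      (fun i hi => h2 i (Finset.mem_insert_of_mem hi))
    have hal : a ≠ l := by rintro rfl; exact hlS (Finset.mem_insert_self _ _)
    have h2a : ‖c' a‖ = r := h2 a (Finset.mem_insert_self _ _)
    have hda : ‖d a‖ = r := by
      rw [hd2 a ha hal]; exact h1 a (Finset.mem_insert_self _ _)
    obtain ⟨b'', hb''⟩ := aux_swap2 p hp hd a l hal (c' a)
      (by rw [← norm_ne_zero_iff, h2a]; exact hr) (by rw [hda, h2a]) (by rw [hd3, h2a])
    refine ⟨b'', _, hb'', ?_, ?_, ?_⟩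
    · intro i hi
      by_cases hia : i = a
      · simp [hia]
      · have hiS : i ∈ S := by simpa [hia] using hi
        have hil : i ≠ l := by rintro rfl; exact hlS hi
        simp [hia, hil, hd1 i hiS]
    · intro i hi hil
      have hia : i ≠ a := by rintro rfl; exact hi (Finset.mem_insert_self _ _)
      simp only [hia, hil, if_false]
      exact hd2 i (fun h => hi (Finset.mem_insert_of_mem h)) hil
    · simp only [hal.symm, if_false, if_true, norm_div, norm_mul, hda, hd3, h2a]
      field_simp

lemma aux_li {ι : Type*} {Q : QuadraticForm ℚ_[p] V}
    {L : Submodule ℤ_[p] V} {b : ι → V} {c : ι → ℚ_[p]} (h : AuxOF p Q L b c)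
    (hc : ∀ i, c i ≠ 0) : LinearIndependent ℚ_[p] b := by
  refine LinearMap.linearIndependent_of_isOrthoᵢ (B := polarBilin Q) ?_ ?_
  · intro i j hij
    simpa using h.orth i j hij
  · intro i hi
    have : polar Q (b i) (b i) = 0 := hi
    rw [aux_polar_self, h.val] at this
    exact hc i (by simpa using this)

lemma aux_basis {ι : Type*} {Q : QuadraticForm ℚ_[p] V}
    {L : Submodule ℤ_[p] V} {b : ι → V} {c : ι → ℚ_[p]} (h : AuxOF p Q L b c)
    (hc : ∀ i, c i ≠ 0) (hL : Submodule.span ℚ_[p] (L : Set V) = ⊤) :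
    ∃ B : Module.Basis ι ℚ_[p] V, ⇑B = b := by
  refine ⟨Module.Basis.mk (aux_li p h hc) ?_, Module.Basis.coe_mk _ _⟩
  rw [← hL, Submodule.span_le, ← h.span]
  exact Submodule.span_le_restrictScalars ℤ_[p] ℚ_[p] (Set.range b)

lemma aux_norm_iff (x : ℚ_[p]) : x ∈ Set.range (algebraMap ℤ_[p] ℚ_[p]) ↔ ‖x‖ ≤ 1 :=
  ⟨by rintro ⟨z, rfl⟩; exact z.2, fun h => ⟨⟨x, h⟩, rfl⟩⟩

lemma aux_mem_L {ι : Type*} [Fintype ι] {Q : QuadraticForm ℚ_[p] V}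
    {L : Submodule ℤ_[p] V} {B : Module.Basis ι ℚ_[p] V} {c : ι → ℚ_[p]}
    (h : AuxOF p Q L B c) (x : V) : x ∈ L ↔ ∀ i, ‖B.repr x i‖ ≤ 1 := by
  rw [← h.span, Module.Basis.mem_span_iff_repr_mem]
  simp only [aux_norm_iff]

lemma aux_mem_dual' (Q : QuadraticForm ℚ_[p] V) (L : Submodule ℤ_[p] V) (x : V) :
    x ∈ dualLattice p Q L ↔ ∀ y ∈ L, ‖polar Q x y‖ ≤ 1 := by
  unfold dualLattice
  rw [LinearMap.BilinForm.mem_dualSubmodule]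
  refine forall₂_congr fun y hy => ?_
  rw [Submodule.mem_one, ← aux_norm_iff]
  rfl

lemma aux_polar_repr {ι : Type*} [Fintype ι] {Q : QuadraticForm ℚ_[p] V}
    {L : Submodule ℤ_[p] V} {B : Module.Basis ι ℚ_[p] V} {c : ι → ℚ_[p]}
    (h : AuxOF p Q L B c) (x : V) (i : ι) : polar Q x (B i) = 2 * (c i * B.repr x i) := by
  classical
  have : polarBilin Q x (B i) = ∑ j, B.repr x j * polarBilin Q (B j) (B i) := by
    conv_lhs => rw [← B.sum_repr x]
    rw [map_sum, LinearMap.sum_apply]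
    refine Finset.sum_congr rfl fun j _ => ?_
    rw [map_smul, LinearMap.smul_apply, smul_eq_mul]
  rw [← polarBilin_apply_apply, this, Finset.sum_eq_single i]
  · rw [polarBilin_apply_apply, aux_polar_self, h.val]; ring
  · intro j _ hj
    rw [polarBilin_apply_apply, h.orth j i hj, mul_zero]
  · simp

lemma aux_mem_dual (hp : p ≠ 2) {ι : Type*} [Fintype ι] {Q : QuadraticForm ℚ_[p] V}
    {L : Submodule ℤ_[p] V} {B : Module.Basis ι ℚ_[p] V} {c : ι → ℚ_[p]}
    (h : AuxOF p Q L B c) (x : V) :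
    x ∈ dualLattice p Q L ↔ ∀ i, ‖c i * B.repr x i‖ ≤ 1 := by
  rw [aux_mem_dual']
  have key : ∀ i, ‖polar Q x (B i)‖ = ‖c i * B.repr x i‖ := by
    intro i
    rw [aux_polar_repr p h, norm_mul, aux_norm_two' p hp, one_mul]
  simp only [← key]
  refine ⟨fun H i => H _ (h.mem p i), fun H y hy => ?_⟩
  rw [← h.span] at hy
  induction hy using Submodule.span_induction with
  | mem y hy => obtain ⟨i, rfl⟩ := hy; exact H i
  | zero => simp
  | add y z _ _ hy hz =>
    rw [polar_add_right]
    exact (Padic.nonarchimedean _ _).trans (max_le hy hz)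
  | smul r y _ hy =>
    rw [aux_smul, polar_smul_right, smul_eq_mul, norm_mul]
    exact mul_le_one₀ r.2 (norm_nonneg _) hy

lemma aux_nosd (hp : p ≠ 2) {ι : Type*} [Fintype ι] {Q : QuadraticForm ℚ_[p] V}
    (hnosd : ¬ ∃ L : Submodule ℤ_[p] V, IsLattice p L ∧ dualLattice p Q L = L)
    (b : ι → V) (hcard : Fintype.card ι = Module.finrank ℚ_[p] V) (hι : Nonempty ι)
    (horth : ∀ i j, i ≠ j → polar Q (b i) (b j) = 0) (hval : ∀ i, ‖Q (b i)‖ = 1) : False := by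
  have h : AuxOF p Q (Submodule.span ℤ_[p] (Set.range b)) b (fun i => Q (b i)) :=
    ⟨horth, fun _ => rfl, rfl⟩
  have hc : ∀ i, Q (b i) ≠ 0 := fun i h0 => by
    have := hval i
    rw [h0] at this
    simp at this
  let B := basisOfLinearIndependentOfCardEqFinrank (aux_li p h hc) hcard
  have hB : ⇑B = b := coe_basisOfLinearIndependentOfCardEqFinrank _ _
  apply hnosd
  refine ⟨Submodule.span ℤ_[p] (Set.range b), ⟨?_, ?_⟩, ?_⟩
  · exact Submodule.fg_span (Set.finite_range b)
  · rw [eq_top_iff, ← B.span_eq, hB]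
    exact Submodule.span_mono Submodule.subset_span
  · rw [← hB] at h
    ext x
    rw [← hB, aux_mem_dual p hp h, aux_mem_L p h]
    refine forall_congr' fun i => ?_
    rw [norm_mul, hB, hval, one_mul]

lemma aux_nonsquare (hp : p ≠ 2) {ι : Type*} [Fintype ι] [DecidableEq ι]
    {Q : QuadraticForm ℚ_[p] V}
    (hnosd : ¬ ∃ L : Submodule ℤ_[p] V, IsLattice p L ∧ dualLattice p Q L = L)
    {L : Submodule ℤ_[p] V} {b : ι → V} {c : ι → ℚ_[p]} (h : AuxOF p Q L b c)
    (hcard : Fintype.card ι = Module.finrank ℚ_[p] V) (hc : ∀ i, c i ≠ 0)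
    (i j : ι) (hij : i ≠ j) (hk : ∀ k, k ≠ i → k ≠ j → ‖c k‖ = 1) :
    ¬ IsSquare (-(c i * c j)) := by
  rintro ⟨s, hs⟩
  have hci := hc i
  have hcj := hc j
  obtain ⟨z, hz⟩ : ∃ z, z ^ 2 * c j = - c i := ⟨s / c j, by
    field_simp; linear_combination -hs⟩
  obtain ⟨t, ht⟩ : ∃ t, 4 * t * c i = 1 := ⟨1 / (4 * c i), by field_simp⟩
  have oij := h.orth i j hij
  have oji := h.orth j i hij.symm
  have hpi : polar Q (b i) (b i) = 2 * c i := by rw [aux_polar_self, h.val]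
  have hpj : polar Q (b j) (b j) = 2 * c j := by rw [aux_polar_self, h.val]
  set u := (1 + t) • b i + (z * (1 - t)) • b j with hu
  set v := (1 - t) • b i + (z * (1 + t)) • b j with hv
  have huv : polar Q u v = 0 := by
    simp only [hu, hv, polar_add_left, polar_add_right, polar_smul_left, polar_smul_right,
      oij, oji, hpi, hpj, smul_eq_mul]
    linear_combination (2 * (1 + t) * (1 - t)) * hz
  have huk : ∀ k, k ≠ i → k ≠ j → polar Q u (b k) = 0 := by
    intro k hki hkj
    simp [hu, polar_add_left, polar_smul_left, h.orth i k hki.symm, h.orth j k hkj.symm]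
  have hvk : ∀ k, k ≠ i → k ≠ j → polar Q v (b k) = 0 := by
    intro k hki hkj
    simp [hv, polar_add_left, polar_smul_left, h.orth i k hki.symm, h.orth j k hkj.symm]
  refine aux_nosd p hp hnosd (fun k => if k = i then u else if k = j then v else b k) hcard ⟨i⟩
    ?_ ?_
  · intro k l hkl
    by_cases hki : k = i
    · subst hki
      by_cases hlj : l = j
      · subst hlj; simpa [hkl.symm] using huv
      · simpa [hkl.symm, hlj] using huk l hkl.symm hlj
    · by_cases hkj : k = j
      · subst hkj
        by_cases hli : l = i
        · subst hli; rw [polar_comm]; simpa [hkl] using huv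
        · simpa [hli, hki, hkl.symm] using hvk l hli hkl.symm
      · by_cases hli : l = i
        · subst hli; rw [polar_comm]; simpa [hki, hkj] using huk k hki hkj
        · by_cases hlj : l = j
          · subst hlj; rw [polar_comm]; simpa [hki, hkj, hli] using hvk k hki hkj
          · simpa [hki, hkj, hli, hlj] using h.orth k l hkl
  · intro k
    by_cases hki : k = i
    · have e : Q u = 1 := by
        rw [hu, aux_Q_comb p Q _ _ _ _ oij, h.val, h.val]
        linear_combination (1 - t) ^ 2 * hz + ht
      simp [hki, e]
    · by_cases hkj : k = j
      · have e : Q v = -1 := by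
          rw [hv, aux_Q_comb p Q _ _ _ _ oij, h.val, h.val]
          linear_combination (1 + t) ^ 2 * hz - ht
        subst hkj
        simp [hki, e]
      · simpa [hki, hkj, h.val] using hk k hki hkj

lemma aux_disc {ι : Type*} [Fintype ι] {Q : QuadraticForm ℚ_[p] V}
    {L L' : Submodule ℤ_[p] V} {B : Module.Basis ι ℚ_[p] V} {b : ι → V} {c c' : ι → ℚ_[p]}
    (h : AuxOF p Q L B c) (h' : AuxOF p Q L' b c') (f : V →ₗ[ℚ_[p]] V) (hf : ∀ i, f (B i) = b i) :
    ∏ i, c' i = LinearMap.det f ^ 2 * ∏ i, c i := by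
  classical
  have e := LinearMap.BilinForm.toMatrix_comp B B (polarBilin Q) f f
  have e1 : LinearMap.BilinForm.toMatrix B (LinearMap.BilinForm.comp (polarBilin Q) f f)
      = Matrix.diagonal fun i => 2 * c' i := by
    ext i j
    rw [LinearMap.BilinForm.toMatrix_apply, LinearMap.BilinForm.comp_apply, hf, hf,
      polarBilin_apply_apply]
    by_cases hij : i = j
    · subst hij; rw [aux_polar_self, h'.val, Matrix.diagonal_apply_eq]
    · rw [h'.orth i j hij, Matrix.diagonal_apply_ne _ hij]
  have e2 : LinearMap.BilinForm.toMatrix B (polarBilin Q) = Matrix.diagonal fun i => 2 * c i := by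
    ext i j
    rw [LinearMap.BilinForm.toMatrix_apply, polarBilin_apply_apply]
    by_cases hij : i = j
    · subst hij; rw [aux_polar_self, h.val, Matrix.diagonal_apply_eq]
    · rw [h.orth i j hij, Matrix.diagonal_apply_ne _ hij]
  rw [e1, e2] at e
  have e3 := congrArg Matrix.det e
  simp only [Matrix.det_mul, Matrix.det_transpose, Matrix.det_diagonal, LinearMap.det_toMatrix,
    Finset.prod_mul_distrib] at e3
  have h2 : (∏ _i : ι, (2 : ℚ_[p])) ≠ 0 := Finset.prod_ne_zero_iff.2 fun _ _ => two_ne_zero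
  apply mul_left_cancel₀ h2
  rw [e3]; ring

lemma aux_isometry {ι : Type*} [Fintype ι] {Q : QuadraticForm ℚ_[p] V}
    {L L' : Submodule ℤ_[p] V} {B B' : Module.Basis ι ℚ_[p] V} {c : ι → ℚ_[p]}
    (h : AuxOF p Q L B c) (h' : AuxOF p Q L' B' c) :
    (∀ x, Q (B.equiv B' (Equiv.refl ι) x) = Q x) ∧
      ⇑(B.equiv B' (Equiv.refl ι)) '' (L : Set V) = (L' : Set V) := by
  classical
  set g := B.equiv B' (Equiv.refl ι) with hg
  have hgB : ∀ i, g (B i) = B' i := fun i => by simp [hg]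
  have hrepr : ∀ x i, B'.repr (g x) i = B.repr x i := fun x i => by
    simp [hg, Module.Basis.equiv]
  constructor
  · have e : LinearMap.BilinForm.comp (polarBilin Q) (g : V →ₗ[ℚ_[p]] V) (g : V →ₗ[ℚ_[p]] V) = polarBilin Q := by
      refine LinearMap.BilinForm.ext_basis B fun i j => ?_
      rw [LinearMap.BilinForm.comp_apply]
      simp only [LinearEquiv.coe_coe, hgB, polarBilin_apply_apply]
      by_cases hij : i = j
      · subst hij; rw [aux_polar_self, aux_polar_self, h.val, h'.val]
      · rw [h.orth i j hij, h'.orth i j hij]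
    intro x
    have e1 := congrArg (fun F : LinearMap.BilinForm ℚ_[p] V => F x x) e
    simp only [LinearMap.BilinForm.comp_apply, LinearEquiv.coe_coe, polarBilin_apply_apply] at e1
    rw [aux_polar_self, aux_polar_self] at e1
    exact mul_left_cancel₀ two_ne_zero e1
  · ext y
    constructor
    · rintro ⟨x, hx, rfl⟩
      rw [SetLike.mem_coe, aux_mem_L p h']
      rw [SetLike.mem_coe, aux_mem_L p h] at hx
      intro i; rw [hrepr]; exact hx i
    · intro hy
      refine ⟨g.symm y, ?_, by simp⟩
      rw [SetLike.mem_coe, aux_mem_L p h] 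
      rw [SetLike.mem_coe, aux_mem_L p h'] at hy
      intro i
      have := hy i
      rwa [← g.apply_symm_apply y, hrepr] at this

lemma aux_det_one {ι : Type*} [Fintype ι] [DecidableEq ι] 
    (B B₁ B' : Module.Basis ι ℚ_[p] V) (l : ι)
    (hB : ∀ k, B₁ k = if k = l then
      LinearMap.det (B.equiv B' (Equiv.refl ι) : V →ₗ[ℚ_[p]] V) • B k else B k) :
    LinearMap.det (B₁.equiv B' (Equiv.refl ι) : V →ₗ[ℚ_[p]] V) = 1 := by
  set δ := LinearMap.det (B.equiv B' (Equiv.refl ι) : V →ₗ[ℚ_[p]] V) with hδ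
  have hδ0 : δ ≠ 0 := (LinearEquiv.isUnit_det' (B.equiv B' (Equiv.refl ι))).ne_zero
  let w : ι → ℚ_[p] := fun k => if k = l then δ else 1
  let h := Matrix.toLin B B (Matrix.diagonal w)
  have hh : ∀ k, h (B k) = B₁ k := by
    intro k
    rw [Matrix.toLin_self, Finset.sum_eq_single k]
    · rw [Matrix.diagonal_apply_eq, hB]
      by_cases hk : k = l <;> simp [w, hk]
    · intro j _ hj
      rw [Matrix.diagonal_apply_ne _ hj, zero_smul]
    · simp
  have hdet : LinearMap.det h = δ := by
    rw [LinearMap.det_toLin, Matrix.det_diagonal]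
    simp [w]
  have hcomp : (B.equiv B' (Equiv.refl ι) : V →ₗ[ℚ_[p]] V)
      = (B₁.equiv B' (Equiv.refl ι) : V →ₗ[ℚ_[p]] V) ∘ₗ h := by
    refine B.ext fun k => ?_
    rw [LinearMap.comp_apply, hh]
    simp
  have := congrArg LinearMap.det hcomp
  rw [LinearMap.det_comp, hdet, ← hδ] at this
  exact mul_right_cancel₀ hδ0 (by rw [one_mul]; exact this.symm)

lemma aux_exists (hp : p ≠ 2) [FiniteDimensional ℚ_[p] V] {Q : QuadraticForm ℚ_[p] V}
    (hQ : LinearMap.BilinForm.Nondegenerate (QuadraticMap.polarBilin Q))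
    {Λ : Submodule ℤ_[p] V} (hΛ : IsTypeTwoVertexLattice p Q Λ) :
    ∃ (b : Fin (Module.finrank ℚ_[p] V) → V) (c : Fin (Module.finrank ℚ_[p] V) → ℚ_[p]),
      AuxOF p Q Λ b c ∧ ∀ i, c i ≠ 0 := by
  obtain ⟨⟨hfg, hsp⟩, hpΛ, hle, hch⟩ := hΛ
  obtain ⟨k, b, hb1, hb2, hb3⟩ := aux_diag p hp Q _ Λ le_rfl (by
    intro x hx
    have h1 := (aux_mem_dual' p Q Λ _).1 (hpΛ x hx) x hx
    rw [aux_smul, polar_smul_left, aux_polar_self, smul_eq_mul] at h1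
    have e : ‖((p : ℤ_[p]) : ℚ_[p]) * (2 * Q x)‖ = ‖(p : ℚ_[p]) * Q x‖ := by
      simp only [norm_mul, aux_norm_two' p hp, one_mul]
      simp
    rwa [e] at h1) (by
    intro x hx h
    refine hQ.1 x fun y => ?_
    have h2 : Submodule.span ℚ_[p] (Λ : Set V) ≤ LinearMap.ker (polarBilin Q x) := by
      rw [Submodule.span_le]
      intro z hz
      simpa using h z hz
    have h3 : y ∈ LinearMap.ker (polarBilin Q x) := h2 (hsp ▸ Submodule.mem_top)
    exact h3)
  have h : AuxOF p Q Λ b (fun i => Q (b i)) := ⟨hb1, fun _ => rfl, hb3⟩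
  obtain ⟨B, hB⟩ := aux_basis p h hb2 hsp
  have hk : k = Module.finrank ℚ_[p] V := by
    rw [Module.finrank_eq_card_basis B, Fintype.card_fin]
  subst hk
  exact ⟨b, _, h, hb2⟩

def auxD {ι : Type*} (B : Module.Basis ι ℚ_[p] V) (w : ι → ℚ_[p]) : Submodule ℤ_[p] V where
  carrier := {x | ∀ i, ‖w i * B.repr x i‖ ≤ 1}
  add_mem' := by
    intro x y hx hy i
    rw [map_add, Finsupp.add_apply, mul_add]
    exact (Padic.nonarchimedean _ _).trans (max_le (hx i) (hy i))
  zero_mem' := by intro i; simp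
  smul_mem' := by
    intro r x hx i
    have e : w i * B.repr (r • x) i = r * (w i * B.repr x i) := by
      rw [aux_smul, map_smul, Finsupp.smul_apply, smul_eq_mul]; ring
    rw [e, norm_mul]
    exact mul_le_one₀ r.2 (norm_nonneg _) (hx i)

lemma auxD_lt {ι : Type*} [DecidableEq ι] (B : Module.Basis ι ℚ_[p] V) (w w' : ι → ℚ_[p])
    (h : ∀ i, ‖w i‖ ≤ ‖w' i‖) (k : ι) (hk : ‖w k‖ ≤ 1) (hk' : 1 < ‖w' k‖) :
    auxD p B w' < auxD p B w := by
  refine lt_of_le_of_ne (fun x hx i => ?_) fun e => ?_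
  · refine le_trans ?_ (hx i)
    rw [norm_mul, norm_mul]
    exact mul_le_mul_of_nonneg_right (h i) (norm_nonneg _)
  · have h1 : B k ∈ auxD p B w := by
      intro i
      by_cases hi : k = i
      · subst hi; simpa using hk
      · simp [Finsupp.single_apply, hi]
    rw [← e] at h1
    have := h1 k
    simp at this
    linarith

lemma aux_padic_norm (x : ℚ_[p]) (h1 : 1 ≤ ‖x‖) (h2 : ‖x‖ ≤ p) : ‖x‖ = 1 ∨ ‖x‖ = p := by
  have hx : x ≠ 0 := by rintro rfl; simp at h1; linarith
  have hp1 : (1 : ℝ) < p := by exact_mod_cast (Fact.out : p.Prime).one_lt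
  have e := Padic.norm_eq_zpow_neg_valuation hx
  generalize -x.valuation = m at e
  rw [e] at h1 h2 ⊢
  have hm0 : 0 ≤ m := by
    rw [← zpow_zero (p : ℝ)] at h1
    exact (zpow_le_zpow_iff_right₀ hp1).1 h1
  have hm1 : m ≤ 1 := by
    have h2' : (p : ℝ) ^ m ≤ (p : ℝ) ^ (1 : ℤ) := by simpa using h2
    exact (zpow_le_zpow_iff_right₀ hp1).1 h2'
  have : m = 0 ∨ m = 1 := by omega
  rcases this with rfl | rfl <;> simp

lemma aux_type (hp : p ≠ 2) {ι : Type*} [Fintype ι] [DecidableEq ι] [Nonempty ι]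
    {Q : QuadraticForm ℚ_[p] V}
    {Λ : Submodule ℤ_[p] V} (hΛ : IsTypeTwoVertexLattice p Q Λ)
    {B : Module.Basis ι ℚ_[p] V} {c : ι → ℚ_[p]} (h : AuxOF p Q Λ B c) (hc : ∀ i, c i ≠ 0) :
    ∃ i j, i ≠ j ∧ ‖c i‖ = p ∧ ‖c j‖ = p ∧ ∀ k, k ≠ i → k ≠ j → ‖c k‖ = 1 := by
  classical
  obtain ⟨⟨hfg, hsp⟩, hpΛ, hle, f, hf0, hf2, hf⟩ := hΛ
  have hp1 : (1 : ℝ) < p := by exact_mod_cast (Fact.out : p.Prime).one_lt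
  have hA : dualLattice p Q Λ = auxD p B c := by
    ext x; exact aux_mem_dual p hp h x
  have hB1 : Λ = auxD p B 1 := by
    ext x; rw [aux_mem_L p h]; simp [auxD]
  have hn : ∀ i, ‖c i‖ = 1 ∨ ‖c i‖ = p := by
    intro i
    apply aux_padic_norm
    · have h1 : (c i)⁻¹ • B i ∈ Λ := by
        apply hle
        rw [aux_mem_dual p hp h]
        intro k
        by_cases hk : i = k
        · subst hk; simp [hc i]
        · simp [Finsupp.single_apply, hk]
      have h2 := (aux_mem_L p h _).1 h1 i
      simp at h2
      exact (inv_le_one₀ (norm_pos_iff.2 (hc i))).1 h2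
    · have h1 := (aux_mem_dual p hp h _).1 (hpΛ _ (h.mem p i)) i
      rw [aux_smul, map_smul, Finsupp.smul_apply] at h1
      simp at h1
      have hp0 : (0 : ℝ) < p := by linarith
      rwa [← div_eq_mul_inv, div_le_one hp0] at h1
  obtain ⟨M, hAM, hMB⟩ : ∃ M, dualLattice p Q Λ ⋖ M ∧ M ⋖ Λ := by
    refine ⟨f 1, ?_, ?_⟩
    · have := hf 0
      rw [← hf0]; exact this
    · have := hf 1
      rw [← hf2]; exact this
  set T : Finset ι := Finset.univ.filter fun i => ‖c i‖ = p with hT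
  have hmT : ∀ i, i ∈ T ↔ ‖c i‖ = p := by intro i; simp [hT]
  have hmT' : ∀ i, i ∉ T → ‖c i‖ = 1 := fun i hi =>
    (hn i).resolve_right fun e => hi ((hmT i).2 e)
  have hc1 : ∀ i, 1 ≤ ‖c i‖ := fun i => by rcases hn i with e | e <;> rw [e]; exact hp1.le
  have hT3 : ¬ 2 < T.card := by
    intro hcard
    obtain ⟨i, hi, j, hj, k, hk, hij, hik, hjk⟩ := Finset.two_lt_card.1 hcard
    rw [hmT] at hi hj hk
    set w1 : ι → ℚ_[p] := fun m => if m = i then 1 else c m with hw1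
    set w2 : ι → ℚ_[p] := fun m => if m = i then 1 else if m = j then 1 else c m with hw2
    have l1 : auxD p B c < auxD p B w1 := by
      refine auxD_lt p B _ _ (fun m => ?_) i (by simp [hw1]) (by rw [hi]; exact hp1)
      simp only [hw1]; split_ifs
      · simpa using hc1 m
      · exact le_rfl
    have l2 : auxD p B w1 < auxD p B w2 := by
      refine auxD_lt p B _ _ (fun m => ?_) j (by simp [hw2])
        (by simp only [hw1, hij.symm, if_false]; rw [hj]; exact hp1)
      simp only [hw1, hw2]; split_ifs
      · exact le_rfl
      · simpa using hc1 m
      · exact le_rfl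
    have l3 : auxD p B w2 < auxD p B 1 := by
      refine auxD_lt p B _ _ (fun m => ?_) k (by simp)
        (by simp only [hw2, hik.symm, hjk.symm, if_false]; rw [hk]; exact hp1)
      simp only [hw2]; split_ifs
      · simp
      · simp
      · simpa using hc1 m
    rw [← hA] at l1
    rw [← hB1] at l3
    set N := auxD p B w1
    have hNB : N < Λ := l2.trans l3
    have hcov : N ⋖ Λ := by
      by_cases hNM : N ≤ M
      · rcases hAM.eq_or_eq l1.le hNM with e | e
        · exact absurd e l1.ne'
        · rw [e]; exact hMB
      · have e1 : M ⊔ N = Λ := by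
          rcases hMB.eq_or_eq le_sup_left (sup_le hMB.le hNB.le) with e | e
          · exact absurd (by rw [← e]; exact le_sup_right) hNM
          · exact e
        have e2 : M ⊓ N = dualLattice p Q Λ := by
          rcases hAM.eq_or_eq (le_inf hAM.le l1.le) inf_le_left with e | e
          · exact e
          · have hMN : M ≤ N := by rw [← e]; exact inf_le_right
            rcases hMB.eq_or_eq hMN hNB.le with e' | e'
            · exact absurd e'.le hNM
            · exact absurd e' hNB.ne
        rw [← e1]
        exact covBy_sup_of_inf_covBy_left (by rw [e2]; exact hAM)
    exact hcov.2 l2 l3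
  have hT1 : ¬ T.card ≤ 1 := by
    intro hcard
    obtain ⟨i, hi⟩ := Finset.card_le_one_iff_subset_singleton.1 hcard
    have hoth : ∀ k, k ≠ i → ‖c k‖ = 1 := fun k hk => hmT' k fun hkT => hk (by simpa using hi hkT)
    obtain ⟨y, hyM, hyA⟩ := SetLike.exists_of_lt hAM.lt
    have hyΛ := hMB.le hyM
    rw [aux_mem_L p h] at hyΛ
    have hyi : 1 < ‖c i * B.repr y i‖ := by
      by_contra hcon
      apply hyA
      rw [aux_mem_dual p hp h]
      intro k
      by_cases hk : k = i
      · subst hk; exact not_lt.1 hcon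
      · rw [norm_mul, hoth k hk, one_mul]; exact hyΛ k
    have hy0 : B.repr y i ≠ 0 := by
      intro e; rw [e] at hyi; simp at hyi; linarith
    have hcp : ‖c i‖ ≤ p := by rcases hn i with e | e <;> rw [e]; exact hp1.le
    have hpp : ‖c i * B.repr y i‖ ≤ p := by
      rw [norm_mul]
      calc ‖c i‖ * ‖B.repr y i‖ ≤ p * 1 :=
            mul_le_mul hcp (hyΛ i) (norm_nonneg _) (by linarith)
        _ = p := mul_one _
    have hyp : ‖c i * B.repr y i‖ = p :=
      (aux_padic_norm p _ hyi.le hpp).resolve_left hyi.ne'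
    have hy1 : ‖B.repr y i‖ = 1 := by
      refine le_antisymm (hyΛ i) ?_
      rw [norm_mul] at hyp
      by_contra hcon
      have hcon := not_le.1 hcon
      nlinarith [norm_nonneg (B.repr y i), norm_nonneg (c i)]
    apply hMB.lt.not_ge
    intro x hx
    rw [aux_mem_L p h] at hx
    have hr : ‖B.repr x i / B.repr y i‖ ≤ 1 := by rw [norm_div, hy1, div_one]; exact hx i
    have e : x = (x - (B.repr x i / B.repr y i) • y) + (B.repr x i / B.repr y i) • y := by abel
    rw [e]
    refine M.add_mem (hAM.le ?_) (aux_smul_mem p M _ hr y hyM)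
    rw [aux_mem_dual p hp h]
    intro k
    by_cases hk : k = i
    · subst hk; simp [hy0]
    · rw [norm_mul, hoth k hk, one_mul, map_sub, map_smul, Finsupp.sub_apply, Finsupp.smul_apply,
        sub_eq_add_neg]
      refine (Padic.nonarchimedean _ _).trans (max_le (hx k) ?_)
      rw [norm_neg, smul_eq_mul, norm_mul]
      exact mul_le_one₀ hr (norm_nonneg _) (hyΛ k)
  have hT2 : T.card = 2 := by omega
  obtain ⟨i, j, hij, hTe⟩ := Finset.card_eq_two.1 hT2
  refine ⟨i, j, hij, (hmT i).1 (by simp [hTe]), (hmT j).1 (by simp [hTe]), fun k hki hkj => ?_⟩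
  exact hmT' k (by simp [hTe, hki, hkj])

end AuxLemmas

theorem statement_3 (hp : p ≠ 2)
    (Q : QuadraticForm ℚ_[p] V)
    (hQ : LinearMap.BilinForm.Nondegenerate (QuadraticMap.polarBilin Q))
    (hn : 3 ≤ Module.finrank ℚ_[p] V)
    (hnosd : ¬ ∃ L : Submodule ℤ_[p] V, IsLattice p L ∧ dualLattice p Q L = L)
    (Λ₁ Λ₂ : Submodule ℤ_[p] V)
    (hΛ₁ : IsTypeTwoVertexLattice p Q Λ₁) (hΛ₂ : IsTypeTwoVertexLattice p Q Λ₂) :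
    ∃ g : V ≃ₗ[ℚ_[p]] V, (∀ x, Q (g x) = Q x) ∧
      LinearMap.det (g : V →ₗ[ℚ_[p]] V) = 1 ∧
      ⇑g '' (Λ₁ : Set V) = (Λ₂ : Set V) := by
  have hfd : FiniteDimensional ℚ_[p] V := Module.finite_of_finrank_pos (by omega)
  have hp1 : (1 : ℝ) < p := by exact_mod_cast (Fact.out : p.Prime).one_lt
  have hp0 : (p : ℝ) ≠ 0 := by linarith
  have hsp₁ := hΛ₁.1.2
  have hsp₂ := hΛ₂.1.2
  obtain ⟨b₁, c₁, h₁, hc₁⟩ := aux_exists p hp hQ hΛ₁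
  obtain ⟨b₂', c₂', h₂', hc₂'⟩ := aux_exists p hp hQ hΛ₂
  have hcard : Fintype.card (Fin (Module.finrank ℚ_[p] V)) = Module.finrank ℚ_[p] V :=
    Fintype.card_fin _
  have hne : Nonempty (Fin (Module.finrank ℚ_[p] V)) := ⟨⟨0, by omega⟩⟩
  have hcard3 : 3 ≤ Fintype.card (Fin (Module.finrank ℚ_[p] V)) := by rw [hcard]; exact hn
  classical
  obtain ⟨B₁, hB₁⟩ := aux_basis p h₁ hc₁ hsp₁
  obtain ⟨B₂', hB₂'⟩ := aux_basis p h₂' hc₂' hsp₂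
  obtain ⟨i, j, hij, hi, hj, hk⟩ := aux_type p hp hΛ₁ (B := B₁) (by rw [hB₁]; exact h₁) hc₁
  obtain ⟨i', j', hij', hi', hj', hk'⟩ := aux_type p hp hΛ₂ (B := B₂') (by rw [hB₂']; exact h₂') hc₂'
  obtain ⟨σ, hσi, hσj⟩ : ∃ σ : Equiv.Perm (Fin (Module.finrank ℚ_[p] V)), σ i = i' ∧ σ j = j' := by
    refine ⟨(Equiv.swap i i').trans (Equiv.swap (Equiv.swap i i' j) j'), ?_, ?_⟩
    · rw [Equiv.trans_apply, Equiv.swap_apply_left]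
      apply Equiv.swap_apply_of_ne_of_ne _ hij'
      intro e
      apply hij
      apply (Equiv.swap i i').injective
      rw [Equiv.swap_apply_left]; exact e
    · rw [Equiv.trans_apply, Equiv.swap_apply_left]
  -- reindexed second family
  obtain ⟨b₂, c₂, h₂, hc₂, hi₂, hj₂, hk₂⟩ : ∃ (b₂ : (Fin (Module.finrank ℚ_[p] V)) → V) (c₂ : (Fin (Module.finrank ℚ_[p] V)) → ℚ_[p]), AuxOF p Q Λ₂ b₂ c₂ ∧
      (∀ k, c₂ k ≠ 0) ∧ ‖c₂ i‖ = p ∧ ‖c₂ j‖ = p ∧ ∀ k, k ≠ i → k ≠ j → ‖c₂ k‖ = 1 := by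
    refine ⟨b₂' ∘ σ, c₂' ∘ σ, ⟨fun k l hkl => h₂'.orth _ _ (σ.injective.ne hkl),
      fun k => h₂'.val _, ?_⟩, fun k => hc₂' _, ?_, ?_, ?_⟩
    · rw [σ.surjective.range_comp]; exact h₂'.span
    · simpa [hσi] using hi'
    · simpa [hσj] using hj'
    · intro k hki hkj
      apply hk'
      · rw [← hσi]; exact σ.injective.ne hki
      · rw [← hσj]; exact σ.injective.ne hkj
  -- first adjustment
  obtain ⟨b₃, d, h₃, hd1, hd2, hd3⟩ := aux_multi p hp h₁ j c₂ p hp0 hj {i}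
    (by simpa using hij.symm) (by simpa using hi) (by simpa using hi₂)
  have hdi : d i = c₂ i := hd1 i (by simp)
  have hdk : ∀ k, k ≠ i → k ≠ j → d k = c₁ k := fun k hki hkj => hd2 k (by simpa using hki) hkj
  have hd0 : ∀ k, d k ≠ 0 := by
    intro k
    by_cases hki : k = i
    · rw [hki, hdi]; exact hc₂ i
    · by_cases hkj : k = j
      · rw [hkj, ← norm_ne_zero_iff, hd3]; exact hp0
      · rw [hdk k hki hkj]; exact hc₁ k
  have hn1 := aux_nonsquare p hp hnosd h₃ hcard hd0 i j hij
    (fun k hki hkj => by rw [hdk k hki hkj]; exact hk k hki hkj)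
  have hn2 := aux_nonsquare p hp hnosd h₂ hcard hc₂ i j hij hk₂
  have hpQ : (p : ℚ_[p]) ≠ 0 := by exact_mod_cast (Fact.out : p.Prime).ne_zero
  have hnsc : ∀ x : ℚ_[p], ¬ IsSquare x → ¬ IsSquare ((p : ℚ_[p]) ^ 2 * x) := by
    rintro x hx ⟨s, hs⟩
    exact hx ⟨s / p, by field_simp; linear_combination hs⟩
  have hsq := aux_nonsq p hp (u := (p : ℚ_[p]) ^ 2 * -(d i * d j))
    (v := (p : ℚ_[p]) ^ 2 * -(c₂ i * c₂ j))
    (by rw [norm_mul, norm_neg, norm_mul, norm_pow, Padic.norm_p, hdi, hi₂, hd3]; field_simp)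
    (by rw [norm_mul, norm_neg, norm_mul, norm_pow, Padic.norm_p, hi₂, hj₂]; field_simp)
    (hnsc _ hn1) (hnsc _ hn2)
  obtain ⟨s, hs⟩ := hsq
  have hci0 := hc₂ i
  have hcj0 := hc₂ j
  have hs2 : d j = s ^ 2 * c₂ j := by
    rw [hdi] at hs
    field_simp at hs
    linear_combination hs
  have hsn : ‖s‖ = 1 := by
    have e := congrArg norm hs2
    rw [norm_mul, norm_pow, hd3, hj₂] at e
    have e2 : ‖s‖ ^ 2 = 1 := by
      apply mul_right_cancel₀ hp0; rw [one_mul]; exact e.symm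
    exact (pow_eq_one_iff_of_nonneg (norm_nonneg _) two_ne_zero).1 e2
  have hs0 : s ≠ 0 := by rintro rfl; simp at hsn
  have h₄ := aux_scale p h₃ j s⁻¹ (by rw [norm_inv, hsn, inv_one])
  set b₄ : (Fin (Module.finrank ℚ_[p] V)) → V := fun k => if k = j then s⁻¹ • b₃ k else b₃ k with hb₄
  set d₄ : (Fin (Module.finrank ℚ_[p] V)) → ℚ_[p] := fun k => if k = j then s⁻¹ ^ 2 * d k else d k with hd₄
  have hd₄i : d₄ i = c₂ i := by simp only [hd₄, hij, if_false]; exact hdi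
  have hd₄j : d₄ j = c₂ j := by
    simp only [hd₄, if_true]; rw [hs2]; field_simp
  have hd₄k : ∀ k, k ≠ i → k ≠ j → ‖d₄ k‖ = 1 := by
    intro k hki hkj
    simp only [hd₄, hkj, if_false]
    rw [hdk k hki hkj]; exact hk k hki hkj
  clear_value b₄ d₄
  -- second adjustment
  obtain ⟨l, hli, hlj⟩ : ∃ l : (Fin (Module.finrank ℚ_[p] V)), l ≠ i ∧ l ≠ j := by
    by_contra hcon
    push Not at hcon
    have : (Finset.univ : Finset (Fin (Module.finrank ℚ_[p] V))) ⊆ {i, j} := by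
      intro k _
      by_cases hki : k = i
      · simp [hki]
      · simp [hcon k hki]
    have h2 := Finset.card_le_card this
    have h3 : ({i, j} : Finset (Fin (Module.finrank ℚ_[p] V))).card ≤ 2 := Finset.card_le_two
    rw [Finset.card_univ] at h2
    omega
  have hS : ∀ k, k ∈ (Finset.univ.filter fun k : (Fin (Module.finrank ℚ_[p] V)) => k ≠ i ∧ k ≠ j ∧ k ≠ l) ↔
      (k ≠ i ∧ k ≠ j ∧ k ≠ l) := by intro k; simp
  obtain ⟨b₅, d₅, h₅, he1, he2, he3⟩ := aux_multi p hp h₄ l c₂ 1 one_ne_zero (hd₄k l hli hlj)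
    (Finset.univ.filter fun k : (Fin (Module.finrank ℚ_[p] V)) => k ≠ i ∧ k ≠ j ∧ k ≠ l)
    (by simp) (fun k hkS => hd₄k k ((hS k).1 hkS).1 ((hS k).1 hkS).2.1)
    (fun k hkS => hk₂ k ((hS k).1 hkS).1 ((hS k).1 hkS).2.1)
  have hd₅ : ∀ k, k ≠ l → d₅ k = c₂ k := by
    intro k hkl
    by_cases hki : k = i
    · subst hki; rw [he2 k (by simp) hkl, hd₄i]
    · by_cases hkj : k = j
      · subst hkj; rw [he2 k (by simp) hkl, hd₄j]
      · exact he1 k ((hS k).2 ⟨hki, hkj, hkl⟩)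
  have hd₅0 : ∀ k, d₅ k ≠ 0 := by
    intro k
    by_cases hkl : k = l
    · subst hkl; rw [← norm_ne_zero_iff, he3]; exact one_ne_zero
    · rw [hd₅ k hkl]; exact hc₂ k
  obtain ⟨B, hB⟩ := aux_basis p h₅ hd₅0 hsp₁
  obtain ⟨B₂, hB₂⟩ := aux_basis p h₂ hc₂ hsp₂
  rw [← hB] at h₅
  rw [← hB₂] at h₂
  have hdisc := aux_disc p h₅ h₂ (B.equiv B₂ (Equiv.refl _) : V →ₗ[ℚ_[p]] V) (by intro k; simp)
  set δ := LinearMap.det (B.equiv B₂ (Equiv.refl _) : V →ₗ[ℚ_[p]] V) with hδ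
  have hl2 : c₂ l = δ ^ 2 * d₅ l := by
    rw [← Finset.mul_prod_erase _ _ (Finset.mem_univ l),
      ← Finset.mul_prod_erase _ d₅ (Finset.mem_univ l)] at hdisc
    have e : ∏ x ∈ Finset.univ.erase l, d₅ x = ∏ x ∈ Finset.univ.erase l, c₂ x :=
      Finset.prod_congr rfl fun k hk => hd₅ k (Finset.ne_of_mem_erase hk)
    rw [e, ← mul_assoc] at hdisc
    exact mul_right_cancel₀ (Finset.prod_ne_zero_iff.2 fun k _ => hc₂ k) hdisc
  have hδn : ‖δ‖ = 1 := by
    have e := congrArg norm hl2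
    rw [norm_mul, norm_pow, he3, hk₂ l hli hlj, mul_one] at e
    exact (pow_eq_one_iff_of_nonneg (norm_nonneg _) two_ne_zero).1 e.symm
  have h₆ := aux_scale p h₅ l δ hδn
  have hval : (fun k => if k = l then δ ^ 2 * d₅ k else d₅ k) = c₂ := by
    funext k
    by_cases hkl : k = l
    · subst hkl; simp [hl2]
    · simp [hkl, hd₅ k hkl]
  rw [hval] at h₆
  obtain ⟨B₆, hB₆⟩ := aux_basis p h₆ hc₂ hsp₁
  rw [← hB₆] at h₆
  obtain ⟨g1, g2⟩ := aux_isometry p h₆ h₂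
  refine ⟨B₆.equiv B₂ (Equiv.refl _), g1, ?_, g2⟩
  exact aux_det_one p B B₆ B₂ l (fun k => by rw [hB₆])
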